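/- arXiv:2404.10839 — 6 statements merged into one kernel-verified Lean document; each statement's English description precedes it below -/
import Mathlib

section
/- Let F be a field, α₁,…,αₙ ∈ F and β₁,…,β_m ∈ F (not necessarily distinct), and set f(x) = ∏_{i=1}^n (x − αᵢ) and g(x) = ∏_{j=1}^m (x − βⱼ). Then the resultant satisfies res(f,g) = ∏_{i=1}^n ∏_{j=1}^m (αᵢ − βⱼ) = ∏_{i=1}^n g(αᵢ) = (−1)^{nm} ∏_{j=1}^m f(βⱼ). -/
/-- The Sylvester matrix of two polynomials `f, g` with respect to the (formal) degrees
`n` and `m`: an `(n+m) × (n+m)` matrix whose first `m` columns are the shifted coefficient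
vectors of `f` (column `j`, for `0 ≤ j < m`, has `f_n, f_{n-1}, …, f_0` in rows
`j, j+1, …, j+n`) and whose last `n` columns are the shifted coefficient vectors of `g`
(column `m + j`, for `0 ≤ j < n`, has `g_m, g_{m-1}, …, g_0` in rows `j, j+1, …, j+m`). -/
noncomputable def sylvesterMatrix {R : Type*} [CommRing R] (f g : Polynomial R) (n m : ℕ) :
    Matrix (Fin (n + m)) (Fin (n + m)) R :=
  Matrix.of fun i j =>
    if (j : ℕ) < m then
      if (j : ℕ) ≤ (i : ℕ) ∧ (i : ℕ) ≤ (j : ℕ) + n then f.coeff (n + (j : ℕ) - (i : ℕ)) else 0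
    else
      if (j : ℕ) - m ≤ (i : ℕ) ∧ (i : ℕ) ≤ ((j : ℕ) - m) + m then
        g.coeff (m + ((j : ℕ) - m) - (i : ℕ)) else 0

/-- The resultant of `f` and `g` (of degrees `n` and `m`): the determinant of the
Sylvester matrix `Syl(f, g)`. -/
noncomputable def resultant {R : Type*} [CommRing R] (f g : Polynomial R) (n m : ℕ) : R :=
  (sylvesterMatrix f g n m).det

theorem sylvesterMatrix_eq_submatrix {R : Type*} [CommRing R] (f g : Polynomial R) (n m : ℕ) :
    sylvesterMatrix f g n m =
      (Polynomial.sylvester f g n m).submatrix Fin.revPerm Fin.revPerm := by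
  ext i j
  obtain ⟨j, rfl⟩ := Fin.revPerm.surjective j
  have hi := i.isLt
  induction j using Fin.addCases with
  | left j =>
    have hj := j.isLt
    simp only [sylvesterMatrix, Polynomial.sylvester, Matrix.of_apply, Matrix.submatrix_apply,
      Fin.revPerm_apply, Fin.rev_rev, Fin.addCases_left, Fin.val_rev, Fin.val_castAdd, Set.mem_Icc]
    rw [if_neg (by omega)]
    apply ite_congr
    · apply propext; omega
    · intro h; congr 1; omega
    · intro h; rfl
  | right j =>
    have hj := j.isLt
    simp only [sylvesterMatrix, Polynomial.sylvester, Matrix.of_apply, Matrix.submatrix_apply,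
      Fin.revPerm_apply, Fin.rev_rev, Fin.addCases_right, Fin.val_rev, Fin.val_natAdd, Set.mem_Icc]
    rw [if_pos (by omega)]
    apply ite_congr
    · apply propext; omega
    · intro h; congr 1; omega
    · intro h; rfl

theorem resultant_eq_mathlib {R : Type*} [CommRing R] (f g : Polynomial R) (n m : ℕ) :
    resultant f g n m = Polynomial.resultant f g n m := by
  rw [resultant, sylvesterMatrix_eq_submatrix, Matrix.det_submatrix_equiv_self,
    Polynomial.resultant]

/-- **The resultant as a product over roots.**  For `f(x) = ∏ᵢ (x - αᵢ)` and
`g(x) = ∏ⱼ (x - βⱼ)` over a field `F`, the resultant satisfies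
`res(f, g) = ∏ᵢ ∏ⱼ (αᵢ - βⱼ) = ∏ᵢ g(αᵢ) = (-1)^(n m) ∏ⱼ f(βⱼ)`. -/
theorem resultant_eq_prod_roots {F : Type*} [Field F] (n m : ℕ) (α : Fin n → F)
    (β : Fin m → F) :
    resultant (∏ i : Fin n, (Polynomial.X - Polynomial.C (α i)))
        (∏ j : Fin m, (Polynomial.X - Polynomial.C (β j))) n m =
      ∏ i : Fin n, ∏ j : Fin m, (α i - β j) ∧
    resultant (∏ i : Fin n, (Polynomial.X - Polynomial.C (α i)))
        (∏ j : Fin m, (Polynomial.X - Polynomial.C (β j))) n m =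
      ∏ i : Fin n, (∏ j : Fin m, (Polynomial.X - Polynomial.C (β j))).eval (α i) ∧
    resultant (∏ i : Fin n, (Polynomial.X - Polynomial.C (α i)))
        (∏ j : Fin m, (Polynomial.X - Polynomial.C (β j))) n m =
      (-1) ^ (n * m) *
        ∏ j : Fin m, (∏ i : Fin n, (Polynomial.X - Polynomial.C (α i))).eval (β j) := by
  have key : resultant (∏ i : Fin n, (Polynomial.X - Polynomial.C (α i)))
        (∏ j : Fin m, (Polynomial.X - Polynomial.C (β j))) n m =
      ∏ i : Fin n, (∏ j : Fin m, (Polynomial.X - Polynomial.C (β j))).eval (α i) := by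
    have hg : (∏ j : Fin m, (Polynomial.X - Polynomial.C (β j))).natDegree ≤ m := by
      simp
    have h := Polynomial.resultant_prod_left Finset.univ
      (fun i : Fin n => Polynomial.X - Polynomial.C (α i))
      (∏ j : Fin m, (Polynomial.X - Polynomial.C (β j))) m (by simp) hg
    have hf : (∏ i : Fin n, (Polynomial.X - Polynomial.C (α i))).natDegree = n := by
      simp
    rw [hf] at h
    rw [resultant_eq_mathlib, h]
    refine Finset.prod_congr rfl fun i _ => ?_
    rw [Polynomial.natDegree_X_sub_C, Polynomial.resultant_X_sub_C_left _ _ _ hg]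
  have h2 : ∏ i : Fin n, (∏ j : Fin m, (Polynomial.X - Polynomial.C (β j))).eval (α i) =
      ∏ i : Fin n, ∏ j : Fin m, (α i - β j) := by
    simp [Polynomial.eval_prod]
  refine ⟨key.trans h2, key, (key.trans h2).trans ?_⟩
  simp only [Polynomial.eval_prod, Polynomial.eval_sub, Polynomial.eval_X, Polynomial.eval_C]
  rw [Finset.prod_comm]
  have h3 : ∀ j : Fin m, ∏ i : Fin n, (α i - β j) = (-1) ^ n * ∏ i : Fin n, (β j - α i) := by
    intro j
    have : ∀ i : Fin n, α i - β j = (-1) * (β j - α i) := fun i => by ring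
    simp only [this, Finset.prod_mul_distrib, Finset.prod_const, Finset.card_univ,
      Fintype.card_fin]
  simp only [h3, Finset.prod_mul_distrib, Finset.prod_const, Finset.card_univ,
    Fintype.card_fin, ← pow_mul]
end

section
/- Let F be a field, s a nonempty finite index set, (fᵢ)_{i∈s} polynomials in F[x], and p ∈ F[x] a nonzero polynomial such that fᵢ divides p for every i ∈ s. Then (lcm_{i∈s} fᵢ) · (gcd_{i∈s} (p / fᵢ)) is associated to p; in particular lcm_{i∈s} fᵢ is associated to p / gcd_{i∈s}(p / fᵢ). -/
/-- **LCM from GCD of cofactors.**  Let `F` be a field, `s` a nonempty finite index set,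
`(fᵢ)_{i ∈ s}` polynomials in `F[x]`, and `p ∈ F[x]` a nonzero polynomial divisible by
every `fᵢ`.  Then `(lcm_{i ∈ s} fᵢ) · (gcd_{i ∈ s} (p / fᵢ))` is associated to `p`;
in particular `lcm_{i ∈ s} fᵢ` is associated to `p / gcd_{i ∈ s} (p / fᵢ)`. -/
theorem lcm_mul_gcd_div_associated {F : Type*} [Field F] [DecidableEq F] {ι : Type*} (s : Finset ι)
    (hs : s.Nonempty) (f : ι → Polynomial F) (p : Polynomial F) (hp : p ≠ 0)
    (hdvd : ∀ i ∈ s, f i ∣ p) :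
    Associated (s.lcm f * s.gcd (fun i => p / f i)) p ∧
    Associated (s.lcm f) (p / s.gcd (fun i => p / f i)) := by
  have hq : ∀ i ∈ s, f i * (p / f i) = p := by
    intro i hi
    have h0 : f i ≠ 0 := ne_zero_of_dvd_ne_zero hp (hdvd i hi)
    exact EuclideanDomain.mul_div_cancel' h0 (hdvd i hi)
  obtain ⟨i₀, hi₀⟩ := hs
  obtain ⟨e, he⟩ : s.gcd (fun i => p / f i) ∣ p :=
    (Finset.gcd_dvd hi₀).trans ⟨f i₀, by rw [mul_comm, hq i₀ hi₀]⟩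
  obtain ⟨c, hc⟩ : s.lcm f ∣ p := Finset.lcm_dvd hdvd
  have hG : s.gcd (fun i => p / f i) ≠ 0 := by
    intro h
    rw [h, zero_mul] at he
    exact hp he
  have h1 : s.lcm f * s.gcd (fun i => p / f i) ∣ p := by
    have hL : s.lcm f ∣ e := by
      refine Finset.lcm_dvd fun i hi => ?_
      have h : s.gcd (fun i => p / f i) * f i ∣ s.gcd (fun i => p / f i) * e := by
        rw [← he, mul_comm]
        calc f i * s.gcd (fun i => p / f i) ∣ f i * (p / f i) :=
              mul_dvd_mul_left _ (Finset.gcd_dvd hi)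
          _ = p := hq i hi
      exact (mul_dvd_mul_iff_left hG).1 h
    calc s.lcm f * s.gcd (fun i => p / f i) ∣ e * s.gcd (fun i => p / f i) :=
          mul_dvd_mul_right hL _
      _ = p := by rw [mul_comm, ← he]
  have h2 : p ∣ s.lcm f * s.gcd (fun i => p / f i) := by
    have hcG : c ∣ s.gcd (fun i => p / f i) := by
      refine Finset.dvd_gcd fun i hi => ?_
      have h0 : f i ≠ 0 := ne_zero_of_dvd_ne_zero hp (hdvd i hi)
      refine (mul_dvd_mul_iff_left h0).1 ?_
      rw [hq i hi]
      calc f i * c ∣ s.lcm f * c := mul_dvd_mul_right (Finset.dvd_lcm hi) _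
        _ = p := hc.symm
    calc p = s.lcm f * c := hc
      _ ∣ _ := mul_dvd_mul_left _ hcG
  have hA := associated_of_dvd_dvd h1 h2
  refine ⟨hA, ?_⟩
  have h3 : s.gcd (fun i => p / f i) * (p / s.gcd (fun i => p / f i)) = p :=
    EuclideanDomain.mul_div_cancel' hG ⟨e, he⟩
  refine Associated.of_mul_left (a := s.gcd (fun i => p / f i))
    (c := s.gcd (fun i => p / f i)) ?_ (Associated.refl _) hG
  rw [h3, mul_comm]
  exact hA
end

section
/- Let F be a field and f, g ∈ F[x] nonzero polynomials with n = deg f and m = deg g. Suppose f and g are coprime, i.e., gcd(f,g) = 1. Then for every natural number k with k < n + m, there exists a unique pair of polynomials (a, b) in F[x] such that deg a < m, deg b < n (with the convention deg 0 = −∞), and a·f + b·g = x^k. -/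
/-- **Invertibility of the Sylvester map.**  Let `f, g` be nonzero polynomials over a
field `F` with `n = deg f`, `m = deg g`, and suppose `f` and `g` are coprime.  Then for
every `k < n + m` there is a unique pair `(a, b)` of polynomials with `deg a < m`,
`deg b < n` (with the convention `deg 0 = -∞`) such that `a·f + b·g = x^k`. -/
theorem existsUnique_bezout_pair_for_power {F : Type*} [Field F] (f g : Polynomial F)
    (hf : f ≠ 0) (hg : g ≠ 0) (hco : IsCoprime f g) (k : ℕ)
    (hk : k < f.natDegree + g.natDegree) :
    ∃! ab : Polynomial F × Polynomial F,
      ab.1.degree < (g.natDegree : WithBot ℕ) ∧ ab.2.degree < (f.natDegree : WithBot ℕ) ∧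
      ab.1 * f + ab.2 * g = Polynomial.X ^ k := by
  rw [← Polynomial.degree_eq_natDegree hf, ← Polynomial.degree_eq_natDegree hg]
  obtain ⟨u, v, huv⟩ := hco
  have hdm := EuclideanDomain.div_add_mod (u * Polynomial.X ^ k) g
  have hlt : ((u * Polynomial.X ^ k) % g).degree < g.degree :=
    Polynomial.degree_mod_lt _ hg
  generalize (u * Polynomial.X ^ k) % g = a at hdm hlt
  generalize (u * Polynomial.X ^ k) / g = q at hdm
  have heq : a * f + (v * Polynomial.X ^ k + f * q) * g = Polynomial.X ^ k := by
    linear_combination f * hdm + Polynomial.X ^ k * huv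
  refine ⟨(a, v * Polynomial.X ^ k + f * q), ⟨hlt, ?_, heq⟩, ?_⟩
  · generalize v * Polynomial.X ^ k + f * q = b at heq
    show b.degree < f.degree
    have hbg : b * g = Polynomial.X ^ k - a * f := by linear_combination heq
    have hsum : f.degree + g.degree = ((f.natDegree + g.natDegree : ℕ) : WithBot ℕ) := by
      rw [Polynomial.degree_eq_natDegree hf, Polynomial.degree_eq_natDegree hg]; rfl
    have h1 : (Polynomial.X ^ k : Polynomial F).degree < f.degree + g.degree := by
      rw [hsum, Polynomial.degree_X_pow]
      exact_mod_cast hk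
    have h2 : (a * f).degree < f.degree + g.degree := by
      rw [Polynomial.degree_mul, add_comm f.degree]
      exact WithBot.add_lt_add_right (Polynomial.degree_ne_bot.mpr hf) hlt
    have h3 : (b * g).degree < f.degree + g.degree := by
      rw [hbg]
      exact (Polynomial.degree_sub_le _ _).trans_lt (max_lt h1 h2)
    rw [Polynomial.degree_mul] at h3
    exact lt_of_add_lt_add_right h3
  · generalize v * Polynomial.X ^ k + f * q = b at heq
    rintro ⟨a', b'⟩ ⟨ha', -, h'⟩
    simp only at ha' h'
    have hdvd : g ∣ a' - a :=
      ⟨u * (b - b') + v * (a' - a), by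
        linear_combination (-(a' - a)) * huv + u * (h' - heq)⟩
    have h0 : a' - a = 0 :=
      Polynomial.eq_zero_of_dvd_of_degree_lt hdvd
        ((Polynomial.degree_sub_le _ _).trans_lt (max_lt ha' hlt))
    have haa : a' = a := sub_eq_zero.mp h0
    subst haa
    have hbb : b' * g = b * g := by linear_combination h' - heq
    rw [mul_right_cancel₀ hg hbb]
end

section
/- Let F be a field of characteristic zero, α₁,…,α_k ∈ F pairwise distinct, a₁,…,a_k positive natural numbers, and f = ∏_{i=1}^k (x − αᵢ)^{aᵢ}. For j ≥ 0 set g_j := gcd(f, f^{(1)}, …, f^{(j)}), the monic greatest common divisor of f and its first j derivatives. Then for every r ≥ 1, g_{r−1} · g_{r+1} = (∏_{i : aᵢ = r} (x − αᵢ)) · g_r². In particular the r-th component ∏_{i : aᵢ = r} (x − αᵢ) of the squarefree decomposition of f equals g_{r−1} g_{r+1} / g_r². -/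
/-- `derGcd f j` is the monic greatest common divisor `gcd(f, f⁽¹⁾, …, f⁽ʲ⁾)` of `f` and
its first `j` formal derivatives. -/
noncomputable def derGcd {F : Type*} [Field F] [DecidableEq F] (f : Polynomial F) (j : ℕ) :
    Polynomial F :=
  (Finset.range (j + 1)).gcd fun t => Polynomial.derivative^[t] f

open Polynomial in
lemma aux_rootMult {F : Type*} [Field F] [DecidableEq F] {k : ℕ} (α : Fin k → F)
    (b : Fin k → ℕ) (x : F) :
    rootMultiplicity x (∏ i : Fin k, (X - C (α i)) ^ b i) = ∑ i, if x = α i then b i else 0 := by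
  have h0 : (∏ i : Fin k, (X - C (α i)) ^ b i) ≠ 0 :=
    Finset.prod_ne_zero_iff.2 fun i _ => pow_ne_zero _ (X_sub_C_ne_zero _)
  rw [← count_roots, roots_prod _ _ h0, Multiset.count_bind]
  simp only [roots_pow, roots_X_sub_C, Multiset.count_nsmul, Multiset.count_singleton]
  simp [Finset.sum]

open Polynomial in
lemma aux_derGcd {F : Type*} [Field F] [CharZero F] [DecidableEq F]
    {k : ℕ} (α : Fin k → F) (hα : Function.Injective α) (a : Fin k → ℕ) (j : ℕ) :
    derGcd (∏ i : Fin k, (X - C (α i)) ^ a i) j = ∏ i : Fin k, (X - C (α i)) ^ (a i - j) := by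
  have hne : ∀ b : Fin k → ℕ, (∏ i : Fin k, (X - C (α i)) ^ b i) ≠ 0 := fun b =>
    Finset.prod_ne_zero_iff.2 fun i _ => pow_ne_zero _ (X_sub_C_ne_zero _)
  have hmon : (∏ i : Fin k, (X - C (α i)) ^ (a i - j)).Monic :=
    monic_prod_of_monic _ _ fun i _ => (monic_X_sub_C _).pow _
  set f := ∏ i : Fin k, (X - C (α i)) ^ a i with hf
  have hf0 : f ≠ 0 := hne a
  have hd : ∀ t ≤ j, derGcd f j ∣ derivative^[t] f := fun t ht =>
    Finset.gcd_dvd (f := fun t => derivative^[t] f) (Finset.mem_range.2 (by omega))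
  have hdf : derGcd f j ∣ f := hd 0 (Nat.zero_le _)
  have hd0 : derGcd f j ≠ 0 := ne_zero_of_dvd_ne_zero hf0 hdf
  have hspl : f.Splits := Splits.prod fun i _ => (Splits.X_sub_C _).pow _
  have hdspl : (derGcd f j).Splits := hspl.of_dvd hf0 hdf
  have hnorm : normalize (derGcd f j) = derGcd f j := Finset.normalize_gcd
  rw [← hnorm, ← hmon.normalize_eq_self]
  apply normalize_eq_normalize
  · rw [hdspl.dvd_iff_roots_le_roots hd0 (hne _), Multiset.le_iff_count]
    intro x
    rw [count_roots, count_roots, aux_rootMult]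
    by_cases hx : ∃ i, x = α i
    · obtain ⟨i, rfl⟩ := hx
      have hm : rootMultiplicity (α i) f = a i := by
        rw [hf, aux_rootMult]; simp [hα.eq_iff]
      simp only [hα.eq_iff, Finset.sum_ite_eq, Finset.mem_univ, if_true]
      by_contra! hlt
      have hp : (X - C (α i)) ^ (a i - j + 1) ∣ derGcd f j :=
        (le_rootMultiplicity_iff hd0).1 hlt
      have : a i < rootMultiplicity (α i) f := by
        apply lt_rootMultiplicity_of_isRoot_iterate_derivative hf0
        intro s hs
        rw [← dvd_iff_isRoot]
        rcases le_total s j with h | h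
        · exact (dvd_pow_self _ (by omega)).trans (hp.trans (hd s h))
        · have h2 := pow_sub_dvd_iterate_derivative_of_pow_dvd (s - j) (hp.trans (hd j le_rfl))
          rw [← Function.iterate_add_apply, Nat.sub_add_cancel h] at h2
          exact (dvd_pow_self _ (by omega)).trans h2
      omega
    · have hm : rootMultiplicity x f = 0 := by
        rw [hf, aux_rootMult]
        exact Finset.sum_eq_zero fun i _ => if_neg fun h => hx ⟨i, h⟩
      have := rootMultiplicity_le_rootMultiplicity_of_dvd hf0 hdf x
      omega
  · refine Finset.dvd_gcd fun t ht => ?_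
    rw [Finset.mem_range] at ht
    refine Finset.prod_dvd_of_coprime ?_ ?_
    · intro i _ i' _ h
      exact (pairwise_coprime_X_sub_C hα h).pow
    · intro i _
      refine (pow_dvd_pow _ (by omega : a i - j ≤ a i - t)).trans ?_
      exact pow_sub_dvd_iterate_derivative_of_pow_dvd t
        (Finset.dvd_prod_of_mem (fun i => (X - C (α i)) ^ a i) (Finset.mem_univ i))

open Polynomial in
/-- **Squarefree decomposition from GCDs with derivatives.**  Let `F` be a field of
characteristic zero, `α₁, …, α_k ∈ F` pairwise distinct, `a₁, …, a_k ≥ 1`, and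
`f = ∏ᵢ (x - αᵢ)^{aᵢ}`.  Setting `g_j := gcd(f, f⁽¹⁾, …, f⁽ʲ⁾)`, for every `r ≥ 1` one has
`g_{r-1} · g_{r+1} = (∏_{i : aᵢ = r} (x - αᵢ)) · g_r²`; in particular the `r`-th component
`∏_{i : aᵢ = r} (x - αᵢ)` of the squarefree decomposition of `f` equals
`g_{r-1} g_{r+1} / g_r²`. -/
theorem squarefree_component_eq_gcd_ratio {F : Type*} [Field F] [CharZero F] [DecidableEq F]
    (k : ℕ) (α : Fin k → F) (hα : Function.Injective α) (a : Fin k → ℕ)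
    (ha : ∀ i, 1 ≤ a i) (r : ℕ) (hr : 1 ≤ r) :
    derGcd (∏ i : Fin k, (X - C (α i)) ^ a i) (r - 1) *
        derGcd (∏ i : Fin k, (X - C (α i)) ^ a i) (r + 1) =
      (∏ i ∈ Finset.univ.filter (fun i => a i = r), (X - C (α i))) *
        derGcd (∏ i : Fin k, (X - C (α i)) ^ a i) r ^ 2 ∧
    (∏ i ∈ Finset.univ.filter (fun i => a i = r), (X - C (α i))) =
      derGcd (∏ i : Fin k, (X - C (α i)) ^ a i) (r - 1) *
          derGcd (∏ i : Fin k, (X - C (α i)) ^ a i) (r + 1) /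
        derGcd (∏ i : Fin k, (X - C (α i)) ^ a i) r ^ 2 := by
  have key : derGcd (∏ i : Fin k, (X - C (α i)) ^ a i) (r - 1) *
        derGcd (∏ i : Fin k, (X - C (α i)) ^ a i) (r + 1) =
      (∏ i ∈ Finset.univ.filter (fun i => a i = r), (X - C (α i))) *
        derGcd (∏ i : Fin k, (X - C (α i)) ^ a i) r ^ 2 := by
    rw [aux_derGcd α hα, aux_derGcd α hα, aux_derGcd α hα, Finset.prod_filter,
      ← Finset.prod_pow, ← Finset.prod_mul_distrib, ← Finset.prod_mul_distrib]
    refine Finset.prod_congr rfl fun i _ => ?_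
    rw [← pow_add, ← pow_mul]
    split_ifs with h
    · rw [← pow_succ']; congr 1; omega
    · rw [one_mul]; congr 1; omega
  refine ⟨key, ?_⟩
  have h0 : derGcd (∏ i : Fin k, (X - C (α i)) ^ a i) r ^ 2 ≠ 0 := by
    rw [aux_derGcd α hα]
    exact pow_ne_zero _ (Finset.prod_ne_zero_iff.2 fun i _ => pow_ne_zero _ (X_sub_C_ne_zero _))
  rw [key, mul_div_cancel_right₀ _ h0]
end

section
/- Let F be a field of characteristic zero with algebraic closure K. Let f, g ∈ F[x] be monic polynomials, let γ₁,…,γ_k ∈ K be pairwise distinct, and let a₁,…,a_k, b₁,…,b_k be natural numbers with aᵢ + bᵢ ≥ 1 for every i, such that in K[x] one has f = ∏_{i=1}^k (x − γᵢ)^{aᵢ} and g = ∏_{i=1}^k (x − γᵢ)^{bᵢ}. Then for every function P : ℕ × ℕ → ℕ, the polynomial (f ⋄_P g)(x) := ∏_{i=1}^k (x − γᵢ)^{P(aᵢ, bᵢ)} has all coefficients in F; that is, there exists a monic polynomial h ∈ F[x] whose image in K[x] equals ∏_{i=1}^k (x − γᵢ)^{P(aᵢ, bᵢ)}. -/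
open Polynomial in
theorem rootMult_prod_aux {K : Type*} [Field K] [DecidableEq K] (k : ℕ) (γ : Fin k → K) (a : Fin k → ℕ) (z : K) :
    rootMultiplicity z (∏ i : Fin k, (X - C (γ i)) ^ a i)
      = ∑ i : Fin k, if γ i = z then a i else 0 := by
  have h0 : ∏ i : Fin k, (X - C (γ i)) ^ a i ≠ 0 :=
    Finset.prod_ne_zero_iff.mpr fun i _ => pow_ne_zero _ (X_sub_C_ne_zero _)
  rw [← count_roots, roots_prod _ _ h0, Multiset.count_bind]
  simp only [roots_pow, roots_X_sub_C, Multiset.count_nsmul, Multiset.count_singleton]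
  refine Finset.sum_congr rfl fun i _ => ?_
  by_cases h : γ i = z
  · simp [h]
  · simp [h, Ne.symm h]

open Polynomial in
theorem rootMult_aut_aux {F K : Type*} [Field F] [Field K] [Algebra F K] (f : Polynomial F)
    (σ : K ≃ₐ[F] K) (z : K) :
    rootMultiplicity (σ z) (f.map (algebraMap F K)) =
      rootMultiplicity z (f.map (algebraMap F K)) := by
  have h := eq_rootMultiplicity_map (p := f.map (algebraMap F K)) (f := (σ : K →+* K))
    σ.injective z
  rw [Polynomial.map_map] at h
  have e : (σ : K →+* K).comp (algebraMap F K) = algebraMap F K := by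
    ext x; simp
  rw [e] at h
  exact h.symm


open Polynomial in
/-- **Arbitrary functions of root multiplicities are defined over the base field.**
Let `F` be a field of characteristic zero with algebraic closure `K`.  Let `f, g ∈ F[x]`
be monic, let `γ₁, …, γ_k ∈ K` be pairwise distinct, and let `a₁, …, a_k, b₁, …, b_k` be
natural numbers with `aᵢ + bᵢ ≥ 1` for every `i`, such that in `K[x]` one has
`f = ∏ᵢ (x - γᵢ)^{aᵢ}` and `g = ∏ᵢ (x - γᵢ)^{bᵢ}`.  Then for every `P : ℕ × ℕ → ℕ` the
polynomial `(f ⋄_P g)(x) = ∏ᵢ (x - γᵢ)^{P(aᵢ, bᵢ)}` has all its coefficients in `F`: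
there is a monic `h ∈ F[x]` whose image in `K[x]` is `∏ᵢ (x - γᵢ)^{P(aᵢ, bᵢ)}`. -/
theorem diamond_map_mem_base_field {F K : Type*} [Field F] [CharZero F] [Field K]
    [Algebra F K] [IsAlgClosure F K] (f g : Polynomial F) (hf : f.Monic) (hg : g.Monic)
    (k : ℕ) (γ : Fin k → K) (hγ : Function.Injective γ) (a b : Fin k → ℕ)
    (hab : ∀ i, 1 ≤ a i + b i)
    (hfK : f.map (algebraMap F K) = ∏ i : Fin k, (X - C (γ i)) ^ a i)
    (hgK : g.map (algebraMap F K) = ∏ i : Fin k, (X - C (γ i)) ^ b i)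
    (P : ℕ → ℕ → ℕ) :
    ∃ h : Polynomial F, h.Monic ∧
      h.map (algebraMap F K) = ∏ i : Fin k, (X - C (γ i)) ^ P (a i) (b i) := by
  classical
  have hGal : IsGalois F K := IsAlgClosure.isGalois F K
  set p : Polynomial K := ∏ i : Fin k, (X - C (γ i)) ^ P (a i) (b i) with hp
  have hpm : p.Monic := monic_prod_of_monic _ _ fun i _ => (monic_X_sub_C _).pow _
  have hma : ∀ i, rootMultiplicity (γ i) (f.map (algebraMap F K)) = a i := by
    intro i; rw [hfK, rootMult_prod_aux]; simp [hγ.eq_iff]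
  have hmb : ∀ i, rootMultiplicity (γ i) (g.map (algebraMap F K)) = b i := by
    intro i; rw [hgK, rootMult_prod_aux]; simp [hγ.eq_iff]
  have hfix : ∀ σ : K ≃ₐ[F] K, p.map (σ : K →+* K) = p := by
    intro σ
    have hex : ∀ i, ∃ j, γ j = σ (γ i) := by
      intro i
      by_contra! hne
      have h1 := rootMult_aut_aux f σ (γ i)
      have h2 := rootMult_aut_aux g σ (γ i)
      rw [hma, hfK, rootMult_prod_aux] at h1
      rw [hmb, hgK, rootMult_prod_aux] at h2
      simp only [hne, if_false, Finset.sum_const_zero] at h1 h2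
      have := hab i
      omega
    choose π hπ using hex
    have hinj : Function.Injective π := by
      intro i j hij
      apply hγ
      apply σ.injective
      rw [← hπ, ← hπ, hij]
    have hbij : Function.Bijective π := Finite.injective_iff_bijective.mp hinj
    have ha : ∀ i, a (π i) = a i := fun i => by
      rw [← hma, hπ, rootMult_aut_aux, hma]
    have hb : ∀ i, b (π i) = b i := fun i => by
      rw [← hmb, hπ, rootMult_aut_aux, hmb]
    rw [hp, Polynomial.map_prod]
    refine Fintype.prod_bijective π hbij _ _ ?_
    intro i
    simp [ha, hb, hπ]
  have hl : p ∈ lifts (algebraMap F K) := by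
    rw [lifts_iff_coeff_lifts]
    intro n
    rw [InfiniteGalois.mem_range_algebraMap_iff_fixed]
    intro σ
    have := congrArg (fun q => coeff q n) (hfix σ)
    simpa [coeff_map] using this
  obtain ⟨q, hq, -, hqm⟩ := lifts_and_natDegree_eq_and_monic hl hpm
  exact ⟨q, hqm, hq⟩
end

section
/- Let F be a field of characteristic zero with algebraic closure K, and let m ≥ 1. Let f₁,…,f_m ∈ F[x] be monic polynomials, let γ₁,…,γ_k ∈ K be pairwise distinct, and let a_{j,i} (1 ≤ j ≤ m, 1 ≤ i ≤ k) be natural numbers with, for every i, a_{j,i} ≥ 1 for at least one j, such that in K[x] one has f_j = ∏_{i=1}^k (x − γᵢ)^{a_{j,i}} for each j. Then for every function P : ℕ^m → ℕ, the polynomial ⋄_P(f₁,…,f_m)(x) := ∏_{i=1}^k (x − γᵢ)^{P(a_{1,i},…,a_{m,i})} has all coefficients in F; that is, there exists a monic polynomial h ∈ F[x] whose image in K[x] equals ∏_{i=1}^k (x − γᵢ)^{P(a_{1,i},…,a_{m,i})}. -/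
open Polynomial in
lemma diamond_rootMult {K : Type*} [Field K] {k : ℕ} (γ : Fin k → K) (b : Fin k → ℕ) (x : K) :
    letI := Classical.decEq K
    rootMultiplicity x (∏ i : Fin k, (X - C (γ i)) ^ b i) = ∑ i, if γ i = x then b i else 0 := by
  classical
  have hne : (∏ i : Fin k, (X - C (γ i)) ^ b i) ≠ 0 :=
    Finset.prod_ne_zero_iff.mpr fun i _ => pow_ne_zero _ (X_sub_C_ne_zero _)
  rw [← count_roots, roots_prod _ _ hne, Multiset.count_bind]
  simp only [roots_pow, roots_X_sub_C, Multiset.count_nsmul, Multiset.count_singleton]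
  apply Finset.sum_congr rfl
  intro i _
  by_cases h : γ i = x
  · simp [h]
  · simp [h, Ne.symm h]

open Polynomial in
/-- **Arbitrary functions of root multiplicities of several polynomials are defined over
the base field.**  Let `F` be a field of characteristic zero with algebraic closure `K`,
and `m ≥ 1`.  Let `f₁, …, f_m ∈ F[x]` be monic, let `γ₁, …, γ_k ∈ K` be pairwise
distinct, and let `a_{j,i}` be natural numbers with, for every `i`, `a_{j,i} ≥ 1` for at
least one `j`, such that in `K[x]` one has `f_j = ∏ᵢ (x - γᵢ)^{a_{j,i}}` for each `j`.
Then for every `P : ℕ^m → ℕ` the polynomial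
`⋄_P(f₁, …, f_m)(x) = ∏ᵢ (x - γᵢ)^{P(a_{1,i}, …, a_{m,i})}` has all its coefficients in
`F`: there is a monic `h ∈ F[x]` whose image in `K[x]` is that product. -/
theorem multi_diamond_map_mem_base_field {F K : Type*} [Field F] [CharZero F] [Field K]
    [Algebra F K] [IsAlgClosure F K] (m : ℕ) (hm : 1 ≤ m) (f : Fin m → Polynomial F)
    (hf : ∀ j, (f j).Monic) (k : ℕ) (γ : Fin k → K) (hγ : Function.Injective γ)
    (a : Fin m → Fin k → ℕ) (ha : ∀ i, ∃ j, 1 ≤ a j i)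
    (hfK : ∀ j, (f j).map (algebraMap F K) = ∏ i : Fin k, (X - C (γ i)) ^ a j i)
    (P : (Fin m → ℕ) → ℕ) :
    ∃ h : Polynomial F, h.Monic ∧
      h.map (algebraMap F K) = ∏ i : Fin k, (X - C (γ i)) ^ P (fun j => a j i) := by
  classical
  have hmult : ∀ j i, rootMultiplicity (γ i) ((f j).map (algebraMap F K)) = a j i := by
    intro j i
    rw [hfK, diamond_rootMult]
    rw [Finset.sum_eq_single i]
    · simp
    · intro b _ hb
      simp [hγ.ne hb]
    · simp
  have : Algebra.IsAlgebraic F K := IsAlgClosure.isAlgebraic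
  have : IsGalois F K := { to_normal := IsAlgClosure.normal F K }
  have hmon : (∏ i : Fin k, (X - C (γ i)) ^ P (fun j => a j i)).Monic :=
    monic_prod_of_monic _ _ fun i _ => (monic_X_sub_C _).pow _
  suffices hl : (∏ i : Fin k, (X - C (γ i)) ^ P (fun j => a j i)) ∈ lifts (algebraMap F K) by
    obtain ⟨h, h1, -, h2⟩ := lifts_and_natDegree_eq_and_monic hl hmon
    exact ⟨h, h2, h1⟩
  rw [lifts_iff_coeff_lifts]
  intro n
  rw [InfiniteGalois.mem_range_algebraMap_iff_fixed]
  intro σ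
  have hσ : ∀ j i, rootMultiplicity (σ (γ i)) ((f j).map (algebraMap F K)) = a j i := by
    intro j i
    rw [← hmult j i, eq_rootMultiplicity_map (f := (σ : K →+* K)) σ.injective (γ i),
      Polynomial.map_map]
    congr 2
    ext x
    simp
  have hex : ∀ i, ∃ i', γ i' = σ (γ i) := by
    intro i
    obtain ⟨j, hj⟩ := ha i
    by_contra! hcon
    have := hσ j i
    rw [hfK, diamond_rootMult, Finset.sum_eq_zero] at this
    · omega
    · intro i' _
      simp [hcon i']
  choose e he using hex
  have hinj : Function.Injective e := by
    intro i i' h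
    apply hγ
    apply σ.injective
    rw [← he, ← he, h]
  have hbij : Function.Bijective e := Finite.injective_iff_bijective.mp hinj
  have hae : ∀ j i, a j (e i) = a j i := by
    intro j i
    rw [← hmult j (e i), he, hσ]
  have hmap : (∏ i : Fin k, (X - C (γ i)) ^ P (fun j => a j i)).map (σ : K →+* K)
      = ∏ i : Fin k, (X - C (γ i)) ^ P (fun j => a j i) := by
    rw [Polynomial.map_prod]
    apply Fintype.prod_bijective e hbij
    intro i
    simp [he, hae]
  conv_rhs => rw [← hmap]
  simp [coeff_map]
end
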